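/- For every integer k ≥ 3 there exists a k-way cutting scheme whose maximum separation density is at most 1.3438: there exist a probability space (Ω, 𝒜, μ) and a map c : Ω → (Δ_k → {1,…,k}) with c(ω)(e_i) = i for every ω and every i, such that for all x, y ∈ Δ_k the set {ω : c(ω)(x) ≠ c(ω)(y)} is measurable and μ{ω : c(ω)(x) ≠ c(ω)(y)} ≤ 1.3438·(1/2)·∑_{i=1}^k |x_i − y_i|. (Hence τ_k* ≤ 1.3438 for all k.) -/

import Mathlib

open MeasureTheory

/-!
Two schemes are mixed. In the rounds scheme, independent rounds draw a uniform label `l` and a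
uniform threshold `t`, and a point `x` receives the label of the first round with `t < x l`. After
one round the process starts afresh, which yields linear inequalities for its probabilities:
`x` avoids the label `l` with probability at most `1 - x l`, and then `x` and `y` at distance `D`
are separated with probability at most `(∑ l, |x l - y l| * (1 - min (x l) (y l))) / (1 + D)`.
In the square threshold scheme, `x` receives some label `l` with `t < x l ^ 2` for a single uniform
`t`, and the separation probability is at most `Q = ∑ l, |x l - y l| * (x l + y l)`. The first bound
is at most `2 * D - Q / 2`, so weights `2 / 3` and `1 / 3` cancel `Q` and leave `4 / 3 * D`.
-/

open ProbabilityTheory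
open scoped NNReal

variable {ι : Type*}

section Simplex

variable [Fintype ι] {x y : ι → ℝ}

/-- Half the `ℓ¹` distance: the length of the segment from `x` to `y` in the simplex. -/
noncomputable def segmentLength (x y : ι → ℝ) : ℝ := (1 / 2) * ∑ i, |x i - y i|

lemma segmentLength_nonneg (x y : ι → ℝ) : 0 ≤ segmentLength x y := by
  unfold segmentLength; positivity

lemma sum_abs_sub_eq_two_mul_segmentLength (x y : ι → ℝ) :
    ∑ i, |x i - y i| = 2 * segmentLength x y := by
  unfold segmentLength; ring

lemma sum_max_eq_one_add_segmentLength (hx : x ∈ stdSimplex ℝ ι) (hy : y ∈ stdSimplex ℝ ι) :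
    ∑ i, max (x i) (y i) = 1 + segmentLength x y := by
  have hmax (i : ι) : max (x i) (y i) = (1 / 2) * (x i + y i + |x i - y i|) := by
    linarith [max_add_min (x i) (y i), max_sub_min_eq_abs' (x i) (y i)]
  simp only [hmax, ← Finset.mul_sum, Finset.sum_add_distrib, hx.2, hy.2, segmentLength]
  ring

lemma sub_le_segmentLength (hx : x ∈ stdSimplex ℝ ι) (hy : y ∈ stdSimplex ℝ ι) (i : ι) :
    x i - y i ≤ segmentLength x y :=
  calc x i - y i ≤ max (x i) (y i) - y i := by gcongr; exact le_max_left _ _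
    _ ≤ ∑ j, (max (x j) (y j) - y j) :=
      Finset.single_le_sum (f := fun j => max (x j) (y j) - y j)
        (fun j _ => sub_nonneg.2 (le_max_right _ _)) (Finset.mem_univ i)
    _ = segmentLength x y := by
      rw [Finset.sum_sub_distrib, sum_max_eq_one_add_segmentLength hx hy, hy.2]; ring

lemma segmentLength_comm (x y : ι → ℝ) : segmentLength x y = segmentLength y x := by
  simp only [segmentLength, abs_sub_comm]

lemma abs_sub_le_segmentLength (hx : x ∈ stdSimplex ℝ ι) (hy : y ∈ stdSimplex ℝ ι) (i : ι) :
    |x i - y i| ≤ segmentLength x y :=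
  abs_sub_le_iff.2 ⟨sub_le_segmentLength hx hy i,
    segmentLength_comm x y ▸ sub_le_segmentLength hy hx i⟩

lemma sum_abs_sub_mul_one_sub_min (x y : ι → ℝ) :
    ∑ i, |x i - y i| * (1 - min (x i) (y i)) =
      2 * segmentLength x y - (1 / 2) * ∑ i, |x i - y i| * (x i + y i)
        + (1 / 2) * ∑ i, |x i - y i| * |x i - y i| := by
  have hmin (i : ι) : min (x i) (y i) = (1 / 2) * (x i + y i - |x i - y i|) := by
    linarith [max_add_min (x i) (y i), max_sub_min_eq_abs' (x i) (y i)]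
  rw [← sum_abs_sub_eq_two_mul_segmentLength, Finset.mul_sum, Finset.mul_sum,
    ← Finset.sum_sub_distrib, ← Finset.sum_add_distrib]
  refine Finset.sum_congr rfl fun i _ => ?_
  rw [hmin]; ring

lemma sum_abs_sub_mul_one_sub_min_le (hx : x ∈ stdSimplex ℝ ι) (hy : y ∈ stdSimplex ℝ ι) :
    ∑ i, |x i - y i| * (1 - min (x i) (y i)) ≤
      (1 + segmentLength x y) *
        (2 * segmentLength x y - (1 / 2) * ∑ i, |x i - y i| * (x i + y i)) := by
  have hsq : ∑ i, |x i - y i| * |x i - y i| ≤ segmentLength x y * (2 * segmentLength x y) := by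
    rw [← sum_abs_sub_eq_two_mul_segmentLength, Finset.mul_sum]
    gcongr with i
    exact abs_sub_le_segmentLength hx hy i
  have hsum : ∑ i, |x i - y i| * (x i + y i) ≤ segmentLength x y * 2 := by
    have htwo : ∑ i, (x i + y i) = 2 := by rw [Finset.sum_add_distrib, hx.2, hy.2]; norm_num
    rw [← htwo, Finset.mul_sum]
    gcongr with i
    · exact add_nonneg (hx.1 i) (hy.1 i)
    · exact abs_sub_le_segmentLength hx hy i
  rw [sum_abs_sub_mul_one_sub_min]
  nlinarith [mul_le_mul_of_nonneg_left hsum (segmentLength_nonneg x y)]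

end Simplex

/-- A random labelling of points of `ι → ℝ` by `ι` that labels each vertex of the standard simplex
by itself: a cutting scheme with terminals `ι` and sample space `Ω`. Labels are required to be
measurable at every point, which implies that separation events are measurable. -/
structure CuttingScheme (ι Ω : Type*) [DecidableEq ι] [MeasurableSpace ι] [MeasurableSpace Ω] where
  prob : Measure Ω
  [isProbabilityMeasure : IsProbabilityMeasure prob]
  label : Ω → (ι → ℝ) → ι
  label_single : ∀ ω i, label ω (Pi.single i 1) = i
  measurable_label : ∀ x, Measurable (label · x)

namespace CuttingScheme

variable [DecidableEq ι] [MeasurableSpace ι] {Ω Ω' : Type*} [MeasurableSpace Ω]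
  [MeasurableSpace Ω']

attribute [instance] isProbabilityMeasure

/-- The event that the scheme separates `x` from `y`. -/
def separation (c : CuttingScheme ι Ω) (x y : ι → ℝ) : Set Ω := {ω | c.label ω x ≠ c.label ω y}

lemma measurableSet_separation [Countable ι] [MeasurableSingletonClass ι] (c : CuttingScheme ι Ω)
    (x y : ι → ℝ) : MeasurableSet (c.separation x y) :=
  (measurableSet_eq_fun (c.measurable_label x) (c.measurable_label y)).compl

/-- The scheme that runs `c` with probability `p` and `c'` with probability `q`. -/
noncomputable def mix (p q : ℝ≥0) (hpq : p + q = 1) (c : CuttingScheme ι Ω)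
    (c' : CuttingScheme ι Ω') : CuttingScheme ι (Ω ⊕ Ω') where
  prob := p • c.prob.map Sum.inl + q • c'.prob.map Sum.inr
  isProbabilityMeasure := ⟨by
    rw [Measure.add_apply, Measure.smul_apply, Measure.smul_apply,
      Measure.map_apply measurable_inl .univ, Measure.map_apply measurable_inr .univ,
      Set.preimage_univ, Set.preimage_univ, measure_univ, measure_univ, ENNReal.smul_def,
      ENNReal.smul_def, smul_eq_mul, smul_eq_mul, mul_one, mul_one, ← ENNReal.coe_add, hpq,
      ENNReal.coe_one]⟩
  label := Sum.elim c.label c'.label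
  label_single := by
    rintro (ω | ω) i
    exacts [c.label_single ω i, c'.label_single ω i]
  measurable_label x := measurable_fun_sum (c.measurable_label x) (c'.measurable_label x)

lemma prob_separation_mix [Countable ι] [MeasurableSingletonClass ι] {p q : ℝ≥0} (hpq : p + q = 1)
    (c : CuttingScheme ι Ω) (c' : CuttingScheme ι Ω') (x y : ι → ℝ) :
    (mix p q hpq c c').prob.real ((mix p q hpq c c').separation x y) =
      p * c.prob.real (c.separation x y) + q * c'.prob.real (c'.separation x y) := by
  have hS := (mix p q hpq c c').measurableSet_separation x y
  have hprob : (mix p q hpq c c').prob = p • c.prob.map Sum.inl + q • c'.prob.map Sum.inr := rfl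
  rw [hprob, measureReal_add_apply, measureReal_nnreal_smul_apply, measureReal_nnreal_smul_apply,
    map_measureReal_apply measurable_inl hS, map_measureReal_apply measurable_inr hS]
  rfl

end CuttingScheme

/-- Sample space of a uniform threshold. The endpoint `1` is excluded so that a vertex of the
simplex exceeds every threshold. -/
abbrev Threshold : Type := Set.Ico (0 : ℝ) 1

noncomputable instance : MeasureSpace Threshold := Measure.Subtype.measureSpace

instance : IsProbabilityMeasure (volume : Measure Threshold) :=
  ⟨by simp [Measure.Subtype.volume_univ measurableSet_Ico.nullMeasurableSet]⟩

lemma volume_real_threshold_Ico {a b : ℝ} (ha : 0 ≤ a) (hab : a ≤ b) (hb : b ≤ 1) :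
    volume.real {t : Threshold | a ≤ t ∧ (t : ℝ) < b} = b - a := by
  have himage : Subtype.val '' {t : Threshold | a ≤ t ∧ (t : ℝ) < b} = Set.Ico a b := by
    ext t
    simp only [Set.mem_image, Subtype.exists]
    grind
  rw [measureReal_def, ← volume_image_subtype_coe measurableSet_Ico, himage,
    ← measureReal_def, Real.volume_real_Ico_of_le hab]

lemma volume_real_threshold_Ici {a : ℝ} (ha : 0 ≤ a) (ha1 : a ≤ 1) :
    volume.real {t : Threshold | a ≤ t} = 1 - a := by
  rw [← volume_real_threshold_Ico ha ha1 le_rfl]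
  congr with t
  exact (and_iff_left t.2.2).symm

lemma lt_single_apply_iff [DecidableEq ι] (t : Threshold) (i l : ι) :
    (t : ℝ) < (Pi.single i 1 : ι → ℝ) l ↔ l = i := by
  by_cases h : l = i
  · simp [h, t.2.2]
  · simp [h, t.2.1]

section SquareThreshold

/-- The scheme that draws a threshold `t` and labels `x` by some `l` with `t < x l ^ 2`. The choice
has to depend only on the set of such `l`; Hilbert's `ε` has this property. -/
noncomputable def squareThresholdScheme (ι : Type*) [DecidableEq ι] [Nonempty ι]
    [Finite ι] [MeasurableSpace ι] : CuttingScheme ι Threshold where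
  prob := volume
  label t x := Classical.epsilon fun l => (t : ℝ) < x l ^ 2
  label_single t i := by
    have hsq (l : ι) : (Pi.single i 1 : ι → ℝ) l ^ 2 = (Pi.single i 1 : ι → ℝ) l := by
      by_cases h : l = i <;> simp [h]
    simp_rw [hsq, lt_single_apply_iff]
    exact Classical.epsilon_singleton i
  measurable_label x := by
    have hset : Measurable fun t : Threshold => {l | (t : ℝ) < x l ^ 2} :=
      measurable_set_iff.2 fun l =>
        measurableSet_setOfPred.1 (measurableSet_lt measurable_subtype_coe measurable_const)
    exact (measurable_of_finite fun S : Set ι => Classical.epsilon (· ∈ S)).comp hset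

variable [DecidableEq ι] [Nonempty ι] [MeasurableSpace ι]

lemma squareThresholdScheme_separation_subset [Finite ι] (x y : ι → ℝ) :
    (squareThresholdScheme ι).separation x y ⊆
      ⋃ l, {t | min (x l ^ 2) (y l ^ 2) ≤ t ∧ (t : ℝ) < max (x l ^ 2) (y l ^ 2)} := by
  intro t ht
  by_contra hout
  simp only [Set.mem_iUnion, Set.mem_ofPred_eq, not_exists] at hout
  refine ht (congrArg Classical.epsilon (funext fun l => propext ?_))
  grind

lemma squareThresholdScheme_prob_separation_le [Fintype ι] {x y : ι → ℝ} (hx : x ∈ stdSimplex ℝ ι)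
    (hy : y ∈ stdSimplex ℝ ι) :
    (squareThresholdScheme ι).prob.real ((squareThresholdScheme ι).separation x y) ≤
      ∑ l, |x l - y l| * (x l + y l) := by
  have hsq_le {z : ι → ℝ} (hz : z ∈ stdSimplex ℝ ι) (l : ι) : z l ^ 2 ≤ 1 :=
    pow_le_one₀ (hz.1 l) (mem_Icc_of_mem_stdSimplex hz l).2
  calc (squareThresholdScheme ι).prob.real ((squareThresholdScheme ι).separation x y)
      ≤ ∑ l, volume.real
          {t : Threshold | min (x l ^ 2) (y l ^ 2) ≤ t ∧ (t : ℝ) < max (x l ^ 2) (y l ^ 2)} :=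
        (measureReal_mono (squareThresholdScheme_separation_subset x y)).trans
          (measureReal_iUnion_fintype_le _)
    _ = ∑ l, |x l - y l| * (x l + y l) := by
        refine Finset.sum_congr rfl fun l _ => ?_
        rw [volume_real_threshold_Ico (by positivity) min_le_max
          (max_le (hsq_le hx l) (hsq_le hy l)), max_sub_min_eq_abs', sq_sub_sq, abs_mul,
          abs_of_nonneg (add_nonneg (hx.1 l) (hy.1 l)), mul_comm]

end SquareThreshold

section Stationarity

variable {X : Type*} [MeasurableSpace X] (ρ : Measure X) [IsProbabilityMeasure ρ]

lemma indepFun_infinitePi_head_tail :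
    IndepFun (fun ω : ℕ → X => ω 0) (fun ω n => ω (n + 1)) (Measure.infinitePi fun _ => ρ) := by
  have hcoord : iIndepFun (fun n (ω : ℕ → X) => ω n) (Measure.infinitePi fun _ => ρ) :=
    iIndepFun_infinitePi (X := fun _ => id) fun _ => measurable_id
  have hsplit := indep_iSup_of_disjoint (fun n => (measurable_pi_apply n).comap_le) hcoord
    (S := {0}) (T := {0}ᶜ) disjoint_compl_right
  refine indep_of_indep_of_le_left (indep_of_indep_of_le_right hsplit ?_) ?_
  · rw [MeasurableSpace.pi, MeasurableSpace.comap_iSup]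
    refine iSup_le fun n => ?_
    rw [MeasurableSpace.comap_comp]
    exact le_iSup₂_of_le (n + 1) n.succ_ne_zero le_rfl
  · exact le_iSup₂_of_le 0 rfl le_rfl

lemma measurePreserving_infinitePi_head_tail :
    MeasurePreserving (fun ω : ℕ → X => (ω 0, fun n => ω (n + 1)))
      (Measure.infinitePi fun _ => ρ) (ρ.prod (Measure.infinitePi fun _ => ρ)) where
  measurable := by fun_prop
  map_eq := by
    rw [(indepFun_infinitePi_head_tail ρ).map_prod_eq_prod_map_map
        (by fun_prop : Measurable _).aemeasurable (by fun_prop : Measurable _).aemeasurable,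
      Measure.infinitePi_map_eval,
      Measure.map_infinitePi_infinitePi_of_inj (P := fun _ => ρ) Nat.succ_injective]

end Stationarity

/-- An infinite sequence of rounds, each consisting of a label and a threshold. -/
abbrev Rounds (ι : Type*) : Type _ := ℕ → ι × Threshold

namespace Rounds

/-- The rounds after the first one. -/
def tail (ω : Rounds ι) : Rounds ι := fun n => ω (n + 1)

/-- The round `n` captures `x` if its threshold lies below the coordinate of `x` at its label. -/
def Captures (ω : Rounds ι) (n : ℕ) (x : ι → ℝ) : Prop := ((ω n).2 : ℝ) < x (ω n).1

/-- The label of `x` when no round captures `x`: the vertex that `x` is, if any. -/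
noncomputable def vertexLabel [DecidableEq ι] [Nonempty ι] (x : ι → ℝ) : ι :=
  Classical.epsilon fun i => x = Pi.single i 1

open Classical in
/-- The label of the first round that captures `x`. -/
noncomputable def firstLabel [DecidableEq ι] [Nonempty ι] (ω : Rounds ι) (x : ι → ℝ) : ι :=
  if h : ∃ n, ω.Captures n x then (ω (Nat.find h)).1 else vertexLabel x

section Labels

variable [DecidableEq ι] [Nonempty ι] {ω : Rounds ι} {x y : ι → ℝ}

lemma vertexLabel_single (i : ι) : vertexLabel (Pi.single i 1) = i := by
  have hspec : (Pi.single i 1 : ι → ℝ) = Pi.single (vertexLabel (Pi.single i 1)) 1 :=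
    Classical.epsilon_spec (p := fun j => (Pi.single i 1 : ι → ℝ) = Pi.single j 1) ⟨i, rfl⟩
  by_contra hne
  simpa [Ne.symm hne] using congrFun hspec i

lemma firstLabel_single (ω : Rounds ι) (i : ι) : ω.firstLabel (Pi.single i 1) = i := by
  unfold firstLabel
  split_ifs with h
  · classical exact (lt_single_apply_iff _ _ _).1 (Nat.find_spec h)
  · exact vertexLabel_single i

lemma firstLabel_of_captures (h : ω.Captures 0 x) :
    ω.firstLabel x = (ω 0).1 := by
  classical
  rw [firstLabel, dif_pos ⟨0, h⟩, (Nat.find_eq_zero _).2 h]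

lemma firstLabel_of_not_captures (h : ¬ ω.Captures 0 x) :
    ω.firstLabel x = ω.tail.firstLabel x := by
  classical
  unfold firstLabel
  by_cases htail : ∃ n, ω.tail.Captures n x
  · have hω : ∃ n, ω.Captures n x := htail.imp' (· + 1) fun _ => id
    rw [dif_pos hω, dif_pos htail, Nat.find_comp_succ hω htail h]
    rfl
  · have hω : ¬ ∃ n, ω.Captures n x := by
      rintro ⟨_ | n, hn⟩
      exacts [h hn, htail ⟨n, hn⟩]
    rw [dif_neg hω, dif_neg htail]

lemma tail_firstLabel_ne_of_captures (hne : ω.firstLabel x ≠ ω.firstLabel y)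
    (hy : ω.Captures 0 y) : ω.tail.firstLabel x ≠ (ω 0).1 := by
  have hx : ¬ ω.Captures 0 x := fun hx =>
    hne ((firstLabel_of_captures hx).trans (firstLabel_of_captures hy).symm)
  rwa [firstLabel_of_not_captures hx, firstLabel_of_captures hy] at hne

end Labels

variable [MeasurableSpace ι]

lemma measurableSet_captures [Countable ι] [MeasurableSingletonClass ι] (n : ℕ) (x : ι → ℝ) :
    MeasurableSet {ω : Rounds ι | ω.Captures n x} :=
  measurableSet_lt (by fun_prop) ((measurable_of_countable x).comp (by fun_prop))

lemma measurable_firstLabel [DecidableEq ι] [Nonempty ι] [Countable ι]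
    [MeasurableSingletonClass ι] (x : ι → ℝ) :
    Measurable fun ω : Rounds ι => ω.firstLabel x := by
  classical
  have hcaptured : MeasurableSet {ω : Rounds ι | ∃ n, ω.Captures n x} := by
    rw [Set.ofPred_exists]
    exact .iUnion fun n => measurableSet_captures n x
  refine Measurable.dite (s := {ω : Rounds ι | ∃ n, ω.Captures n x})
    (f := fun ω => (ω.1 (Nat.find ω.2)).1) (g := fun _ => vertexLabel x) ?_ measurable_const
    hcaptured
  exact Measurable.find (f := fun n (ω : {ω : Rounds ι | ∃ n, ω.Captures n x}) => (ω.1 n).1)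
    (fun n => ((measurable_pi_apply n).comp measurable_subtype_coe).fst)
    (fun n => measurable_subtype_coe (measurableSet_captures n x))
    fun ω => ω.2

/-- The law of independent rounds with uniform labels and uniform thresholds, for
finite `ι`. -/
noncomputable def law (ι : Type*) [MeasurableSpace ι] : Measure (Rounds ι) :=
  Measure.infinitePi fun _ => (uniformOn (Set.univ : Set ι)).prod volume

section Law

variable [Nonempty ι] [MeasurableSingletonClass ι]

instance [Finite ι] : IsProbabilityMeasure (law ι) := by unfold law; infer_instance

variable [Fintype ι]

lemma law_real_first_mem_tail_mem_le (l : ι) (T : Set Threshold) (B : Set (Rounds ι)) :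
    (law ι).real {ω | (ω 0).1 = l ∧ (ω 0).2 ∈ T ∧ ω.tail ∈ B} ≤
      (Fintype.card ι : ℝ)⁻¹ * (volume.real T * (law ι).real B) := by
  have huniform : (uniformOn (Set.univ : Set ι)).real {l} = (Fintype.card ι : ℝ)⁻¹ := by
    simp [measureReal_def, uniformOn_univ]
  have hpreimage : {ω : Rounds ι | (ω 0).1 = l ∧ (ω 0).2 ∈ T ∧ ω.tail ∈ B} =
      (fun ω : Rounds ι => (ω 0, ω.tail)) ⁻¹' (({l} ×ˢ T) ×ˢ B) := by
    ext ω
    exact and_assoc.symm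
  calc (law ι).real {ω | (ω 0).1 = l ∧ (ω 0).2 ∈ T ∧ ω.tail ∈ B}
      ≤ (((uniformOn (Set.univ : Set ι)).prod volume).prod (law ι)).real (({l} ×ˢ T) ×ˢ B) := by
        rw [hpreimage]
        exact ENNReal.toReal_mono (measure_ne_top _ _)
          ((measurePreserving_infinitePi_head_tail _).measure_preimage_le _)
    _ = (Fintype.card ι : ℝ)⁻¹ * (volume.real T * (law ι).real B) := by
        rw [measureReal_prod_prod, measureReal_prod_prod, huniform, mul_assoc]

/- Conditioning on the first round bounds `(law ι).real S` by
`(card ι)⁻¹ * ∑ l, ((u l - a l) * (law ι).real (B l) + (1 - u l) * (law ι).real S)`; solving for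
`(law ι).real S` eliminates the cardinality. -/
lemma sum_mul_law_real_le {S : Set (Rounds ι)} {a u : ι → ℝ} {B : ι → Set (Rounds ι)}
    (ha : ∀ l, 0 ≤ a l) (hau : ∀ l, a l ≤ u l) (hu : ∀ l, u l ≤ 1)
    (hS : ∀ ω ∈ S, a (ω 0).1 ≤ (ω 0).2 ∧
      (((ω 0).2 : ℝ) < u (ω 0).1 → ω.tail ∈ B (ω 0).1) ∧ (u (ω 0).1 ≤ (ω 0).2 → ω.tail ∈ S)) :
    (∑ l, u l) * (law ι).real S ≤ ∑ l, (u l - a l) * (law ι).real (B l) := by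
  have hcover : S ⊆ ⋃ l,
      {ω | (ω 0).1 = l ∧ (ω 0).2 ∈ {t : Threshold | a l ≤ t ∧ (t : ℝ) < u l} ∧ ω.tail ∈ B l} ∪
      {ω | (ω 0).1 = l ∧ (ω 0).2 ∈ {t : Threshold | u l ≤ t} ∧ ω.tail ∈ S} := by
    intro ω hω
    obtain ⟨hle, hlt_imp, hge_imp⟩ := hS ω hω
    refine Set.mem_iUnion.2 ⟨(ω 0).1, ?_⟩
    rcases lt_or_ge ((ω 0).2 : ℝ) (u (ω 0).1) with hlt | hge
    exacts [.inl ⟨rfl, ⟨hle, hlt⟩, hlt_imp hlt⟩, .inr ⟨rfl, hge, hge_imp hge⟩]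
  have hfirst : (law ι).real S ≤ ∑ l, ((Fintype.card ι : ℝ)⁻¹ * ((u l - a l) * (law ι).real (B l))
      + (Fintype.card ι : ℝ)⁻¹ * ((1 - u l) * (law ι).real S)) := by
    refine (measureReal_mono hcover).trans ((measureReal_iUnion_fintype_le _).trans ?_)
    refine Finset.sum_le_sum fun l _ => (measureReal_union_le _ _).trans ?_
    rw [← volume_real_threshold_Ico (ha l) (hau l) (hu l),
      ← volume_real_threshold_Ici ((ha l).trans (hau l)) (hu l)]
    exact add_le_add (law_real_first_mem_tail_mem_le _ _ _) (law_real_first_mem_tail_mem_le _ _ _)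
  have hcard : (0 : ℝ) < Fintype.card ι := mod_cast Fintype.card_pos
  rw [Finset.sum_add_distrib, ← Finset.mul_sum, ← Finset.mul_sum, ← mul_add,
    ← div_eq_inv_mul, le_div_iff₀ hcard, ← Finset.sum_mul, Finset.sum_sub_distrib,
    Finset.sum_const, Finset.card_univ, nsmul_one] at hfirst
  linarith

variable [DecidableEq ι] {x : ι → ℝ}

lemma law_real_firstLabel_ne_le (hx : x ∈ stdSimplex ℝ ι) (l : ι) :
    (law ι).real {ω | ω.firstLabel x ≠ l} ≤ 1 - x l := by
  have hrenewal : (∑ m, x m) * (law ι).real {ω | ω.firstLabel x ≠ l} ≤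
      ∑ m, (x m - 0) * (law ι).real {_ω : Rounds ι | m ≠ l} := by
    refine sum_mul_law_real_le (fun _ => le_rfl) hx.1
      (fun m => (mem_Icc_of_mem_stdSimplex hx m).2) fun ω hω => ?_
    refine ⟨(ω 0).2.2.1, fun hlt => ?_, fun hge => ?_⟩
    · rwa [Set.mem_ofPred_eq, firstLabel_of_captures hlt] at hω
    · rwa [Set.mem_ofPred_eq, firstLabel_of_not_captures (not_lt.2 hge)] at hω
  calc (law ι).real {ω | ω.firstLabel x ≠ l}
      = (∑ m, x m) * (law ι).real {ω | ω.firstLabel x ≠ l} := by rw [hx.2, one_mul]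
    _ ≤ ∑ m, (x m - 0) * (law ι).real {_ω : Rounds ι | m ≠ l} := hrenewal
    _ = ∑ m, (x m - if m = l then x m else 0) := by
        refine Finset.sum_congr rfl fun m _ => ?_
        by_cases hm : m = l <;> simp [hm]
    _ = 1 - x l := by simp [Finset.sum_sub_distrib, hx.2]

end Law

end Rounds

/-- The scheme that labels each point by the first of infinitely many independent uniform rounds
that captures it. -/
noncomputable def roundsScheme (ι : Type*) [DecidableEq ι] [Nonempty ι] [Finite ι]
    [MeasurableSpace ι] [MeasurableSingletonClass ι] : CuttingScheme ι (Rounds ι) where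
  prob := Rounds.law ι
  label := Rounds.firstLabel
  label_single := Rounds.firstLabel_single
  measurable_label := Rounds.measurable_firstLabel

section SeparationBounds

variable [Fintype ι] [DecidableEq ι] [Nonempty ι] [MeasurableSpace ι] [MeasurableSingletonClass ι]
  {x y : ι → ℝ}

lemma sum_max_mul_roundsScheme_prob_separation_le (hx : ∀ l, x l ∈ Set.Icc 0 1)
    (hy : ∀ l, y l ∈ Set.Icc 0 1) :
    (∑ l, max (x l) (y l)) * (roundsScheme ι).prob.real ((roundsScheme ι).separation x y) ≤
      ∑ l, |x l - y l| *
        (Rounds.law ι).real {ω | ω.firstLabel (if x l ≤ y l then x else y) ≠ l} := by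
  simp only [← max_sub_min_eq_abs']
  refine Rounds.sum_mul_law_real_le (fun l => le_min (hx l).1 (hy l).1) (fun _ => min_le_max)
    (fun l => max_le (hx l).2 (hy l).2) fun ω hω => ⟨?_, fun hlt => ?_, fun hge => ?_⟩
  · by_contra! hlt
    obtain ⟨hxlt, hylt⟩ := lt_min_iff.1 hlt
    exact hω ((Rounds.firstLabel_of_captures hxlt).trans
      (Rounds.firstLabel_of_captures hylt).symm)
  · rw [Set.mem_ofPred_eq]
    split_ifs with h
    · exact Rounds.tail_firstLabel_ne_of_captures hω (hlt.trans_eq (max_eq_right h))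
    · exact Rounds.tail_firstLabel_ne_of_captures (Ne.symm hω)
        (hlt.trans_eq (max_eq_left (not_le.1 h).le))
  · obtain ⟨hxge, hyge⟩ := max_le_iff.1 hge
    exact fun h => hω ((Rounds.firstLabel_of_not_captures (not_lt.2 hxge)).trans
      (h.trans (Rounds.firstLabel_of_not_captures (not_lt.2 hyge)).symm))

lemma one_add_mul_roundsScheme_prob_separation_le (hx : x ∈ stdSimplex ℝ ι)
    (hy : y ∈ stdSimplex ℝ ι) :
    (1 + segmentLength x y) * (roundsScheme ι).prob.real ((roundsScheme ι).separation x y) ≤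
      ∑ l, |x l - y l| * (1 - min (x l) (y l)) := by
  rw [← sum_max_eq_one_add_segmentLength hx hy]
  refine (sum_max_mul_roundsScheme_prob_separation_le (mem_Icc_of_mem_stdSimplex hx)
    (mem_Icc_of_mem_stdSimplex hy)).trans ?_
  gcongr with l
  split_ifs with h
  · simpa only [min_eq_left h] using Rounds.law_real_firstLabel_ne_le hx l
  · simpa only [min_eq_right (not_le.1 h).le] using Rounds.law_real_firstLabel_ne_le hy l

lemma roundsScheme_prob_separation_le (hx : x ∈ stdSimplex ℝ ι) (hy : y ∈ stdSimplex ℝ ι) :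
    (roundsScheme ι).prob.real ((roundsScheme ι).separation x y) ≤
      2 * segmentLength x y - (1 / 2) * ∑ l, |x l - y l| * (x l + y l) :=
  le_of_mul_le_mul_left
    ((one_add_mul_roundsScheme_prob_separation_le hx hy).trans
      (sum_abs_sub_mul_one_sub_min_le hx hy))
    (by linarith [segmentLength_nonneg x y])

end SeparationBounds

/-- The scheme of separation density `4 / 3`. -/
noncomputable def mixedScheme (ι : Type*) [DecidableEq ι] [Nonempty ι] [Finite ι]
    [MeasurableSpace ι] [MeasurableSingletonClass ι] : CuttingScheme ι (Rounds ι ⊕ Threshold) :=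
  .mix (2 / 3) (1 / 3) (by norm_num [← add_div]) (roundsScheme ι) (squareThresholdScheme ι)

lemma mixedScheme_prob_separation_le [Fintype ι] [DecidableEq ι] [Nonempty ι] [MeasurableSpace ι]
    [MeasurableSingletonClass ι] {x y : ι → ℝ} (hx : x ∈ stdSimplex ℝ ι)
    (hy : y ∈ stdSimplex ℝ ι) :
    (mixedScheme ι).prob.real ((mixedScheme ι).separation x y) ≤ 4 / 3 * segmentLength x y := by
  rw [mixedScheme, CuttingScheme.prob_separation_mix]
  push_cast
  linarith [roundsScheme_prob_separation_le hx hy, squareThresholdScheme_prob_separation_le hx hy]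

theorem exists_k_way_cutting_scheme_density_le_general.{u} (ι : Type u) [Fintype ι] [DecidableEq ι]
    [Nonempty ι] :
    ∃ (Ω : Type u) (_ : MeasurableSpace Ω) (μ : Measure Ω) (_ : IsProbabilityMeasure μ)
      (c : Ω → (ι → ℝ) → ι),
      (∀ ω : Ω, ∀ i : ι, c ω (Pi.single i 1) = i) ∧
      (∀ x ∈ stdSimplex ℝ ι, ∀ y ∈ stdSimplex ℝ ι,
        MeasurableSet {ω : Ω | c ω x ≠ c ω y} ∧
        (μ {ω : Ω | c ω x ≠ c ω y}).toReal ≤ 4 / 3 * ((1 / 2) * ∑ i, |x i - y i|)) := by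
  let : MeasurableSpace ι := ⊤
  have : MeasurableSingletonClass ι := ⟨fun _ => trivial⟩
  exact ⟨Rounds ι ⊕ Threshold, inferInstance, (mixedScheme ι).prob,
    (mixedScheme ι).isProbabilityMeasure, (mixedScheme ι).label, (mixedScheme ι).label_single,
    fun x hx y hy =>
      ⟨(mixedScheme ι).measurableSet_separation x y, mixedScheme_prob_separation_le hx hy⟩⟩

/-- For every `k ≥ 3` there is a `k`-way cutting scheme whose maximum
separation density is at most `1.3438`, hence `τ_k* ≤ 1.3438`. -/
theorem exists_k_way_cutting_scheme_density_le (k : ℕ) (hk : 3 ≤ k) :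
    ∃ (Ω : Type) (_ : MeasurableSpace Ω) (μ : Measure Ω) (_ : IsProbabilityMeasure μ)
      (c : Ω → (Fin k → ℝ) → Fin k),
      (∀ ω : Ω, ∀ i : Fin k, c ω (Pi.single i 1) = i) ∧
      (∀ x ∈ stdSimplex ℝ (Fin k), ∀ y ∈ stdSimplex ℝ (Fin k),
        MeasurableSet {ω : Ω | c ω x ≠ c ω y} ∧
        (μ {ω : Ω | c ω x ≠ c ω y}).toReal ≤ 1.3438 * ((1 / 2) * ∑ i, |x i - y i|)) := by
  have : NeZero k := ⟨by lia⟩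
  obtain ⟨Ω, m, μ, hμ, c, hvertex, hsep⟩ := exists_k_way_cutting_scheme_density_le_general (Fin k)
  refine ⟨Ω, m, μ, hμ, c, hvertex, fun x hx y hy => ⟨(hsep x hx y hy).1, ?_⟩⟩
  refine (hsep x hx y hy).2.trans ?_
  gcongr
  norm_num
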